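/- arXiv:1310.3480 — 2 statements merged into one kernel-verified Lean document; each statement's English description precedes it below -/
import Mathlib

section
/- Let x, y be sequences of positive integers. For every m ≥ 1, every simple submodule of the right regular module A_{2m}(x,y) is isomorphic to the simple module S₂; and for every m ≥ 0, every simple submodule of the right regular module A_{2m+1}(x,y) is isomorphic to the simple module S₁. Equivalently, the socle of A_{2m}(x,y) as a right module over itself is a direct sum of copies of S₂, and the socle of A_{2m+1}(x,y) is a direct sum of copies of S₁. -/
/-!
Write a product of arrows as `g₁ g₂ ⋯ g_r` and order the arrow families as
`α₁ < β₁ < α₂ < β₂ < ⋯` (`AGen.rank`). The relations give `g * g' = 0` for arrows unless `g < g'`.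
Hence a nonzero right submodule `N` contains a nonzero `w` with `w * g = 0` for every arrow `g`
(`exists_killed`): right multiplication by arrows strictly raises the rank, so it must stop.

Let `t` be an arrow of the largest family: `t = e₁ t e₂` is some `β` if the number of families `n`
is even, and `t = e₂ t e₁` is some `α` if it is odd. Right multiplication by `t` is injective on
`A e₁`, resp. `A e₂` (`mul_e1_eq_zero`, `mul_e2_eq_zero`). Instead of a basis of paths, the proof
uses a twisted derivation `D : A → A` with `D(u v) = u D(v) + D(u) χ(v)`, where `χ` is the character
of the source vertex of `t`, `D(t)` is the idempotent of its target vertex, and `D` vanishes on all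
other generators. It respects the defining relations because `t` has the largest rank, and since
`χ(t) = 0` it gives `D(v t) = v D(t)`, so that `v t = 0` implies `v e₁ = 0`, resp. `v e₂ = 0`.
The derivation is encoded as the homomorphism `u ↦ !![u, D u; 0, χ u]` to `2 × 2` matrices over `A`.

Applied to `w`, for which `w t = 0`, this shows that `A` acts on `w` through `χ`, so the line through
`w` is a copy of the simple module of `χ`, and it is all of `N` when `N` is simple.
-/


/-!
Statement 17: for `m ≥ 1`, every simple submodule of the right regular module
`A_{2m}(x,y)` is isomorphic to `S₂`, and for `m ≥ 0`, every simple submodule of the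
right regular module `A_{2m+1}(x,y)` is isomorphic to `S₁` (i.e. the socles are direct
sums of copies of `S₂`, resp. `S₁`).
-/

noncomputable section
set_option linter.unusedSectionVars false
set_option linter.unusedVariables false

/-- The generators of the path algebra of the quiver of `A_n(x,y)`: trivial paths `e₁`, `e₂`,
arrows `a i j = α_{i+1,j+1} : 1 → 2` for `i < ⌊(n+1)/2⌋`, `j < x_{i+1}`, and arrows
`b i j = β_{i+1,j+1} : 2 → 1` for `i < ⌊n/2⌋`, `j < y_{i+1}`.  (The sequences of positive
integers `x = (x₁, x₂, …)` and `y = (y₁, y₂, …)` are encoded as functions `ℕ → ℕ` with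
`x i = x_{i+1}` and `y i = y_{i+1}`.) -/
inductive AGen (x y : ℕ → ℕ) (n : ℕ) : Type
  | e1 : AGen x y n
  | e2 : AGen x y n
  | a (i : Fin ((n + 1) / 2)) (j : Fin (x i)) : AGen x y n
  | b (i : Fin (n / 2)) (j : Fin (y i)) : AGen x y n

/-- The relations defining `A_n(x,y)` as a quotient of the free algebra on `AGen x y n`:
the path algebra relations (products are written in composition order: `u * v` means
"first traverse `v`, then `u`") together with the relations `α_{i,j} β_{i',j'} = 0`
(i.e. `a i j * b i' j' = 0`) for `i' < i`, and `β_{i',j'} α_{i,j} = 0`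
(i.e. `b i' j' * a i j = 0`) for `i ≤ i'`. -/
inductive ARel (k : Type) [Field k] (x y : ℕ → ℕ) (n : ℕ) :
    FreeAlgebra k (AGen x y n) → FreeAlgebra k (AGen x y n) → Prop
  | idem1 : ARel k x y n (FreeAlgebra.ι k AGen.e1 * FreeAlgebra.ι k AGen.e1)
      (FreeAlgebra.ι k AGen.e1)
  | idem2 : ARel k x y n (FreeAlgebra.ι k AGen.e2 * FreeAlgebra.ι k AGen.e2)
      (FreeAlgebra.ι k AGen.e2)
  | orth12 : ARel k x y n (FreeAlgebra.ι k AGen.e1 * FreeAlgebra.ι k AGen.e2) 0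
  | orth21 : ARel k x y n (FreeAlgebra.ι k AGen.e2 * FreeAlgebra.ι k AGen.e1) 0
  | sum : ARel k x y n (FreeAlgebra.ι k AGen.e1 + FreeAlgebra.ι k AGen.e2) 1
  | a_tgt (i) (j) : ARel k x y n (FreeAlgebra.ι k AGen.e2 * FreeAlgebra.ι k (AGen.a i j))
      (FreeAlgebra.ι k (AGen.a i j))
  | a_src (i) (j) : ARel k x y n (FreeAlgebra.ι k (AGen.a i j) * FreeAlgebra.ι k AGen.e1)
      (FreeAlgebra.ι k (AGen.a i j))
  | b_tgt (i) (j) : ARel k x y n (FreeAlgebra.ι k AGen.e1 * FreeAlgebra.ι k (AGen.b i j))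
      (FreeAlgebra.ι k (AGen.b i j))
  | b_src (i) (j) : ARel k x y n (FreeAlgebra.ι k (AGen.b i j) * FreeAlgebra.ι k AGen.e2)
      (FreeAlgebra.ι k (AGen.b i j))
  | ab (i : Fin ((n + 1) / 2)) (j : Fin (x i)) (i' : Fin (n / 2)) (j' : Fin (y i'))
      (h : (i' : ℕ) < (i : ℕ)) :
      ARel k x y n (FreeAlgebra.ι k (AGen.a i j) * FreeAlgebra.ι k (AGen.b i' j')) 0
  | ba (i : Fin ((n + 1) / 2)) (j : Fin (x i)) (i' : Fin (n / 2)) (j' : Fin (y i'))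
      (h : (i : ℕ) ≤ (i' : ℕ)) :
      ARel k x y n (FreeAlgebra.ι k (AGen.b i' j') * FreeAlgebra.ι k (AGen.a i j)) 0

/-- The algebra `A_n(x,y)`. -/
def AAlgebra (k : Type) [Field k] (x y : ℕ → ℕ) (n : ℕ) : Type := RingQuot (ARel k x y n)

instance (k : Type) [Field k] (x y : ℕ → ℕ) (n : ℕ) : Ring (AAlgebra k x y n) :=
  inferInstanceAs (Ring (RingQuot (ARel k x y n)))

instance (k : Type) [Field k] (x y : ℕ → ℕ) (n : ℕ) : Algebra k (AAlgebra k x y n) :=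
  inferInstanceAs (Algebra k (RingQuot (ARel k x y n)))

variable (k : Type) [Field k] (x y : ℕ → ℕ) (n : ℕ)

/-- The idempotent `e₁ ∈ A_n(x,y)`. -/
def Ae1 : AAlgebra k x y n := RingQuot.mkAlgHom k (ARel k x y n) (FreeAlgebra.ι k AGen.e1)

/-- The idempotent `e₂ ∈ A_n(x,y)`. -/
def Ae2 : AAlgebra k x y n := RingQuot.mkAlgHom k (ARel k x y n) (FreeAlgebra.ι k AGen.e2)

/-- The arrow `α_{i+1,j+1} ∈ A_n(x,y)`. -/
def Aalpha (i : Fin ((n + 1) / 2)) (j : Fin (x i)) : AAlgebra k x y n :=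
  RingQuot.mkAlgHom k (ARel k x y n) (FreeAlgebra.ι k (AGen.a i j))

/-- The arrow `β_{i+1,j+1} ∈ A_n(x,y)`. -/
def Abeta (i : Fin (n / 2)) (j : Fin (y i)) : AAlgebra k x y n :=
  RingQuot.mkAlgHom k (ARel k x y n) (FreeAlgebra.ι k (AGen.b i j))
section CharModules

variable {k : Type} [Field k] {A : Type} [Ring A] [Algebra k A]

/-- The one-dimensional right `A`-module determined by a character `φ : A →ₐ[k] k`:
the carrier is `k`, with right action `v · a = φ(a) v`. -/
def CharMod (φ : A →ₐ[k] k) : Type := k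

instance (φ : A →ₐ[k] k) : AddCommGroup (CharMod φ) := inferInstanceAs (AddCommGroup k)

instance (φ : A →ₐ[k] k) : Module Aᵐᵒᵖ (CharMod φ) :=
  Module.compHom k (φ.toRingHom.fromOpposite fun a b => mul_comm (φ a) (φ b))

end CharModules

section AChars

variable (k : Type) [Field k] (x y : ℕ → ℕ) (n : ℕ)

/-- The character of `A_n(x,y)` corresponding to the vertex `1` (it kills `e₂` and all
arrows); the associated one-dimensional right module is the simple module `S₁`. -/
def Achi1 : AAlgebra k x y n →ₐ[k] k :=
  RingQuot.liftAlgHom k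
    ⟨FreeAlgebra.lift k (fun g => match g with
        | AGen.e1 => (1 : k)
        | AGen.e2 => 0
        | AGen.a _ _ => 0
        | AGen.b _ _ => 0),
      by
        rintro u v h
        induction h <;>
          simp [map_mul, map_add, map_one, map_zero, FreeAlgebra.lift_ι_apply]⟩

/-- The character of `A_n(x,y)` corresponding to the vertex `2` (it kills `e₁` and all
arrows); the associated one-dimensional right module is the simple module `S₂`. -/
def Achi2 : AAlgebra k x y n →ₐ[k] k :=
  RingQuot.liftAlgHom k
    ⟨FreeAlgebra.lift k (fun g => match g with
        | AGen.e1 => (0 : k)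
        | AGen.e2 => 1
        | AGen.a _ _ => 0
        | AGen.b _ _ => 0),
      by
        rintro u v h
        induction h <;>
          simp [map_mul, map_add, map_one, map_zero, FreeAlgebra.lift_ι_apply]⟩

/-- The simple right `A_n(x,y)`-module `S₁` corresponding to the vertex `1`. -/
def AS1 : Type := CharMod (Achi1 k x y n)

instance : AddCommGroup (AS1 k x y n) := inferInstanceAs (AddCommGroup (CharMod (Achi1 k x y n)))

instance : Module (AAlgebra k x y n)ᵐᵒᵖ (AS1 k x y n) :=
  inferInstanceAs (Module (AAlgebra k x y n)ᵐᵒᵖ (CharMod (Achi1 k x y n)))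

/-- The simple right `A_n(x,y)`-module `S₂` corresponding to the vertex `2`. -/
def AS2 : Type := CharMod (Achi2 k x y n)

instance : AddCommGroup (AS2 k x y n) := inferInstanceAs (AddCommGroup (CharMod (Achi2 k x y n)))

instance : Module (AAlgebra k x y n)ᵐᵒᵖ (AS2 k x y n) :=
  inferInstanceAs (Module (AAlgebra k x y n)ᵐᵒᵖ (CharMod (Achi2 k x y n)))

end AChars

section SocleProof

/-! ### Relations between the arrows -/

/-- The class of a generator in `A_n(x,y)`. -/
def Agen (g : AGen x y n) : AAlgebra k x y n :=
  RingQuot.mkAlgHom k (ARel k x y n) (FreeAlgebra.ι k g)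

variable {k x y n}

/-- The position of an arrow in the order `α₁ < β₁ < α₂ < β₂ < ⋯` of the arrow families, counted
from `0`. The trivial paths get the value `n`, above all arrows, so that `g.rank < n` says that
`g` is an arrow. -/
def AGen.rank : AGen x y n → ℕ
  | .e1 => n
  | .e2 => n
  | .a i _ => 2 * i
  | .b i _ => 2 * i + 1

lemma Agen_rel {u v : FreeAlgebra k (AGen x y n)} (h : ARel k x y n u v) :
    RingQuot.mkAlgHom k (ARel k x y n) u = RingQuot.mkAlgHom k (ARel k x y n) v :=
  RingQuot.mkAlgHom_rel k h

lemma e1_mul_e1 : (Agen k x y n .e1) * Agen k x y n .e1 = Agen k x y n .e1 := by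
  have := Agen_rel (ARel.idem1 (k := k) (x := x) (y := y) (n := n))
  rwa [map_mul] at this

lemma e2_mul_e2 : (Agen k x y n .e2) * Agen k x y n .e2 = Agen k x y n .e2 := by
  have := Agen_rel (ARel.idem2 (k := k) (x := x) (y := y) (n := n))
  rwa [map_mul] at this

lemma e1_mul_e2 : (Agen k x y n .e1) * Agen k x y n .e2 = 0 := by
  have := Agen_rel (ARel.orth12 (k := k) (x := x) (y := y) (n := n))
  rwa [map_mul, map_zero] at this

lemma e2_mul_e1 : (Agen k x y n .e2) * Agen k x y n .e1 = 0 := by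
  have := Agen_rel (ARel.orth21 (k := k) (x := x) (y := y) (n := n))
  rwa [map_mul, map_zero] at this

lemma e1_add_e2 : (Agen k x y n .e1) + Agen k x y n .e2 = 1 := by
  have := Agen_rel (ARel.sum (k := k) (x := x) (y := y) (n := n))
  rwa [map_add, map_one] at this

lemma e2_mul_a (i) (j) : (Agen k x y n .e2) * Agen k x y n (.a i j) = Agen k x y n (.a i j) := by
  have := Agen_rel (ARel.a_tgt (k := k) (x := x) (y := y) (n := n) i j)
  rwa [map_mul] at this

lemma a_mul_e1 (i) (j) : (Agen k x y n (.a i j)) * Agen k x y n .e1 = Agen k x y n (.a i j) := by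
  have := Agen_rel (ARel.a_src (k := k) (x := x) (y := y) (n := n) i j)
  rwa [map_mul] at this

lemma e1_mul_b (i) (j) : (Agen k x y n .e1) * Agen k x y n (.b i j) = Agen k x y n (.b i j) := by
  have := Agen_rel (ARel.b_tgt (k := k) (x := x) (y := y) (n := n) i j)
  rwa [map_mul] at this

lemma b_mul_e2 (i) (j) : (Agen k x y n (.b i j)) * Agen k x y n .e2 = Agen k x y n (.b i j) := by
  have := Agen_rel (ARel.b_src (k := k) (x := x) (y := y) (n := n) i j)
  rwa [map_mul] at this

lemma a_mul_b (i : Fin ((n + 1) / 2)) (j) (i' : Fin (n / 2)) (j') (h : (i' : ℕ) < (i : ℕ)) :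
    (Agen k x y n (.a i j)) * Agen k x y n (.b i' j') = 0 := by
  have := Agen_rel (ARel.ab (k := k) (x := x) (y := y) (n := n) i j i' j' h)
  rwa [map_mul, map_zero] at this

lemma b_mul_a (i : Fin ((n + 1) / 2)) (j) (i' : Fin (n / 2)) (j') (h : (i : ℕ) ≤ (i' : ℕ)) :
    (Agen k x y n (.b i' j')) * Agen k x y n (.a i j) = 0 := by
  have := Agen_rel (ARel.ba (k := k) (x := x) (y := y) (n := n) i j i' j' h)
  rwa [map_mul, map_zero] at this

lemma a_mul_a (i j i' j') : (Agen k x y n (.a i j)) * Agen k x y n (.a i' j') = 0 := by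
  rw [← a_mul_e1, ← e2_mul_a i', mul_assoc, ← mul_assoc (Agen k x y n .e1), e1_mul_e2, zero_mul,
    mul_zero]

lemma b_mul_b (i j i' j') : (Agen k x y n (.b i j)) * Agen k x y n (.b i' j') = 0 := by
  rw [← b_mul_e2, ← e1_mul_b i', mul_assoc, ← mul_assoc (Agen k x y n .e2), e2_mul_e1, zero_mul,
    mul_zero]

/-- A product of two arrows vanishes unless the rank strictly increases from left to right. -/
lemma Agen_mul_eq_zero {g g' : AGen x y n} (hg : g.rank < n) (h : g'.rank ≤ g.rank) :
    Agen k x y n g * Agen k x y n g' = 0 := by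
  cases g <;> cases g' <;> simp only [AGen.rank] at hg h
  any_goals omega
  · exact a_mul_a ..
  · exact a_mul_b _ _ _ _ (by omega)
  · exact b_mul_a _ _ _ _ (by omega)
  · exact b_mul_b ..

/-! ### Elements annihilated by all arrows -/

lemma exists_killed_aux (N : Submodule (AAlgebra k x y n)ᵐᵒᵖ (AAlgebra k x y n)) (hN : N ≠ ⊥)
    (r : ℕ) (hr : r ≤ n) :
    ∃ w ∈ N, w ≠ 0 ∧ ∀ g : AGen x y n, g.rank < r → w * Agen k x y n g = 0 := by
  induction r with
  | zero =>
    obtain ⟨w, hw, hw0⟩ := N.ne_bot_iff.mp hN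
    exact ⟨w, hw, hw0, fun g hg => absurd hg (Nat.not_lt_zero _)⟩
  | succ r ih =>
    obtain ⟨w, hw, hw0, hk⟩ := ih (by omega)
    by_cases h : ∃ g : AGen x y n, g.rank = r ∧ w * Agen k x y n g ≠ 0
    · obtain ⟨g, hg, hne⟩ := h
      refine ⟨w * Agen k x y n g, N.smul_mem (MulOpposite.op (Agen k x y n g)) hw, hne, ?_⟩
      intro g' hg'
      rw [mul_assoc, Agen_mul_eq_zero (by omega) (by omega), mul_zero]
    · push Not at h
      refine ⟨w, hw, hw0, fun g hg => ?_⟩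
      rcases Nat.lt_succ_iff_lt_or_eq.mp hg with h1 | h1
      · exact hk g h1
      · exact h g h1

/-- Every nonzero right ideal contains a nonzero element annihilated by all arrows. -/
lemma exists_killed (N : Submodule (AAlgebra k x y n)ᵐᵒᵖ (AAlgebra k x y n)) (hN : N ≠ ⊥) :
    ∃ w ∈ N, w ≠ 0 ∧ (∀ i j, w * Agen k x y n (.a i j) = 0) ∧
      ∀ i j, w * Agen k x y n (.b i j) = 0 := by
  obtain ⟨w, hw, hw0, h⟩ := exists_killed_aux N hN n le_rfl
  refine ⟨w, hw, hw0, fun i j => h _ ?_, fun i j => h _ ?_⟩ <;> simp only [AGen.rank] <;> omega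

/-! ### One-dimensional simple submodules -/

/-- To check that `A_n(x,y)` acts on `w` through a character, it suffices to check the generators. -/
lemma mul_eq_smul_of_gen (χ : AAlgebra k x y n →ₐ[k] k) (w : AAlgebra k x y n)
    (h : ∀ g, w * Agen k x y n g = χ (Agen k x y n g) • w) (u : AAlgebra k x y n) :
    w * u = χ u • w := by
  let π : FreeAlgebra k (AGen x y n) →ₐ[k] AAlgebra k x y n := RingQuot.mkAlgHom k (ARel k x y n)
  obtain ⟨f, rfl⟩ : ∃ f, π f = u := RingQuot.mkAlgHom_surjective k (ARel k x y n) u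
  induction f using FreeAlgebra.induction with
  | grade0 r =>
    rw [AlgHom.commutes, AlgHom.commutes, Algebra.algebraMap_eq_smul_one, mul_smul_comm, mul_one]
    rfl
  | grade1 g => exact h g
  | mul a b ha hb =>
    rw [map_mul, map_mul, ← mul_assoc, ha, smul_mul_assoc, hb, smul_smul]
  | add a b ha hb => rw [map_add, map_add, mul_add, ha, hb, add_smul]

/-- A simple right ideal containing a nonzero `w` on which the algebra acts through `χ` is the
one-dimensional module of `χ`. -/
lemma simple_equiv_charMod {A : Type} [Ring A] [Algebra k A] (χ : A →ₐ[k] k)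
    (N : Submodule Aᵐᵒᵖ A) (hN : IsSimpleModule Aᵐᵒᵖ N) (w : A) (hw : w ∈ N) (hw0 : w ≠ 0)
    (h : ∀ u, w * u = χ u • w) : Nonempty (N ≃ₗ[Aᵐᵒᵖ] CharMod χ) := by
  have hmem : ∀ c : k, c • w ∈ N := fun c => by
    have := N.smul_mem (MulOpposite.op (algebraMap k A c)) hw
    rwa [MulOpposite.smul_eq_mul_unop, MulOpposite.unop_op, ← Algebra.commutes,
      ← Algebra.smul_def] at this
  let f : CharMod χ →ₗ[Aᵐᵒᵖ] N :=
    { toFun := fun c => ⟨(show k from c) • w, hmem c⟩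
      map_add' := fun c d => Subtype.ext (add_smul (show k from c) (show k from d) w)
      map_smul' := fun u c => Subtype.ext <| by
        change (χ u.unop * (show k from c)) • w = ((show k from c) • w) * u.unop
        rw [smul_mul_assoc, h, smul_smul, mul_comm] }
  have hinj : Function.Injective f := fun c d hcd =>
    smul_left_injective k hw0 (congrArg Subtype.val hcd)
  have hne : f ≠ 0 := fun h0 => hw0 <| by
    have := congrArg Subtype.val (LinearMap.congr_fun h0 (show CharMod χ from (1 : k)))
    change (1 : k) • w = 0 at this
    rwa [one_smul] at this
  have hsurj : Function.Surjective f := LinearMap.surjective_of_ne_zero hne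
  exact ⟨(LinearEquiv.ofBijective f ⟨hinj, hsurj⟩).symm⟩

/-! ### Twisted derivations and right multiplication by the last arrows -/

/-- The values on generators of the homomorphism `u ↦ !![u, D u; 0, c u]`, where `D` and `c` are
prescribed on generators. -/
def twMat (D : AGen x y n → AAlgebra k x y n) (c : AGen x y n → k) (g : AGen x y n) :
    Matrix (Fin 2) (Fin 2) (AAlgebra k x y n) :=
  !![Agen k x y n g, D g; 0, algebraMap k _ (c g)]

lemma twMat_mul (D : AGen x y n → AAlgebra k x y n) (c : AGen x y n → k) (g g' : AGen x y n) :
    twMat D c g * twMat D c g' = !![Agen k x y n g * Agen k x y n g',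
      Agen k x y n g * D g' + D g * algebraMap k _ (c g'); 0, algebraMap k _ (c g * c g')] := by
  simp [twMat]
  exact Algebra.smul_def ..

/-- If `u ↦ !![u, D u; 0, c u]` is compatible with the defining relations, and `c t = 0`, then
`v t = 0` implies `v D(t) = 0`. -/
lemma mul_D_eq_zero (D : AGen x y n → AAlgebra k x y n) (c : AGen x y n → k)
    (h : ∀ ⦃u v⦄, ARel k x y n u v →
      FreeAlgebra.lift k (twMat D c) u = FreeAlgebra.lift k (twMat D c) v)
    (t : AGen x y n) (ht : c t = 0) (v : AAlgebra k x y n) (hv : v * Agen k x y n t = 0) :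
    v * D t = 0 := by
  let Φ : AAlgebra k x y n →ₐ[k] Matrix (Fin 2) (Fin 2) (AAlgebra k x y n) :=
    RingQuot.liftAlgHom k ⟨FreeAlgebra.lift k (twMat D c), h⟩
  let π : FreeAlgebra k (AGen x y n) →ₐ[k] AAlgebra k x y n := RingQuot.mkAlgHom k (ARel k x y n)
  have hπ : ∀ f, Φ (π f) = FreeAlgebra.lift k (twMat D c) f := fun f =>
    RingQuot.liftAlgHom_mkAlgHom_apply k (FreeAlgebra.lift k (twMat D c)) h f
  have hgen : ∀ g, Φ (Agen k x y n g) = twMat D c g := fun g => by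
    rw [← FreeAlgebra.lift_ι_apply (R := k) (twMat D c) g]; exact hπ _
  have h00 : ∀ f, Φ (π f) 0 0 = π f ∧ Φ (π f) 1 0 = 0 := fun f => by
    induction f using FreeAlgebra.induction with
    | grade0 r => simp [Matrix.algebraMap_matrix_apply]
    | grade1 g =>
      have : Φ (π (FreeAlgebra.ι k g)) = twMat D c g := hgen g
      rw [this]; exact ⟨rfl, rfl⟩
    | mul a b ha hb => simp [Matrix.mul_apply, Fin.sum_univ_two, ha, hb]
    | add a b ha hb => simp [ha, hb]
  obtain ⟨f, hf⟩ := RingQuot.mkAlgHom_surjective k (ARel k x y n) v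
  have hv00 : Φ v 0 0 = v := by
    have := (h00 f).1
    rwa [show π f = v from hf] at this
  -- The upper right entry of `Φ (v t) = Φ v * Φ t` is `v D(t) + D(v) c(t)`.
  have key := congrFun (congrFun (congrArg Φ hv) 0) 1
  rw [map_mul, hgen, map_zero, Matrix.mul_apply, Fin.sum_univ_two, hv00] at key
  simpa [twMat, ht] using key

open Classical in
/-- Right multiplication by any arrow of the last family `β_m` of `A_{2m}` is injective on
`A e₁`. -/
lemma mul_e1_eq_zero {i : Fin (n / 2)} (j : Fin (y i)) (hi : n = 2 * (i + 1))
    (v : AAlgebra k x y n) (hv : v * Agen k x y n (.b i j) = 0) : v * Agen k x y n .e1 = 0 := by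
  let D : AGen x y n → AAlgebra k x y n := fun g => if g = .b i j then Agen k x y n .e1 else 0
  let c : AGen x y n → k := fun g => match g with
    | .e2 => 1
    | _ => 0
  have := mul_D_eq_zero D c ?_ (.b i j) rfl v hv
  · simpa [D] using this
  rintro u v h
  induction h with
  | ab i₁ j₁ i' j' h =>
    have hne : i' ≠ i := by rintro rfl; omega
    simp only [map_mul, map_zero, FreeAlgebra.lift_ι_apply, twMat_mul]
    ext p q; fin_cases p <;> fin_cases q <;> simp [D, c, a_mul_b _ _ _ _ h, hne]
  | ba i₁ j₁ i' j' h =>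
    simp only [map_mul, map_zero, FreeAlgebra.lift_ι_apply, twMat_mul]
    ext p q; fin_cases p <;> fin_cases q <;> simp [D, c, b_mul_a _ _ _ _ h]
  | sum =>
    simp only [map_add, map_one, FreeAlgebra.lift_ι_apply]
    ext p q; fin_cases p <;> fin_cases q <;> simp [twMat, D, c, e1_add_e2]
  | _ =>
    simp only [map_mul, map_zero, FreeAlgebra.lift_ι_apply, twMat_mul]
    ext p q; fin_cases p <;> fin_cases q <;>
      simp [twMat, D, c, e1_mul_e1, e2_mul_e2, e1_mul_e2, e2_mul_e1, e2_mul_a, a_mul_e1,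
        e1_mul_b, b_mul_e2]

open Classical in
/-- Right multiplication by any arrow of the last family `α_{m+1}` of `A_{2m+1}` is injective on
`A e₂`. -/
lemma mul_e2_eq_zero {i : Fin ((n + 1) / 2)} (j : Fin (x i)) (hi : n = 2 * i + 1)
    (v : AAlgebra k x y n) (hv : v * Agen k x y n (.a i j) = 0) : v * Agen k x y n .e2 = 0 := by
  let D : AGen x y n → AAlgebra k x y n := fun g => if g = .a i j then Agen k x y n .e2 else 0
  let c : AGen x y n → k := fun g => match g with
    | .e1 => 1
    | _ => 0
  have := mul_D_eq_zero D c ?_ (.a i j) rfl v hv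
  · simpa [D] using this
  rintro u v h
  induction h with
  | ba i₁ j₁ i' j' h =>
    have hne : i₁ ≠ i := by rintro rfl; omega
    simp only [map_mul, map_zero, FreeAlgebra.lift_ι_apply, twMat_mul]
    ext p q; fin_cases p <;> fin_cases q <;> simp [D, c, b_mul_a _ _ _ _ h, hne]
  | ab i₁ j₁ i' j' h =>
    simp only [map_mul, map_zero, FreeAlgebra.lift_ι_apply, twMat_mul]
    ext p q; fin_cases p <;> fin_cases q <;> simp [D, c, a_mul_b _ _ _ _ h]
  | sum =>
    simp only [map_add, map_one, FreeAlgebra.lift_ι_apply]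
    ext p q; fin_cases p <;> fin_cases q <;> simp [twMat, D, c, e1_add_e2]
  | _ =>
    simp only [map_mul, map_zero, FreeAlgebra.lift_ι_apply, twMat_mul]
    ext p q; fin_cases p <;> fin_cases q <;>
      simp [twMat, D, c, e1_mul_e1, e2_mul_e2, e1_mul_e2, e2_mul_e1, e2_mul_a, a_mul_e1,
        e1_mul_b, b_mul_e2]

/-! ### The characters on generators -/

lemma Achi1_gen (g : AGen x y n) : Achi1 k x y n (Agen k x y n g) = match g with
    | .e1 => 1
    | _ => 0 := by
  refine (RingQuot.liftAlgHom_mkAlgHom_apply k _ _ _).trans ?_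
  cases g <;> simp [FreeAlgebra.lift_ι_apply]

lemma Achi2_gen (g : AGen x y n) : Achi2 k x y n (Agen k x y n g) = match g with
    | .e2 => 1
    | _ => 0 := by
  refine (RingQuot.liftAlgHom_mkAlgHom_apply k _ _ _).trans ?_
  cases g <;> simp [FreeAlgebra.lift_ι_apply]

end SocleProof

/-- STATEMENT 17: every simple submodule of the right regular module `A_{2m}(x,y)`
(`m ≥ 1`) is isomorphic to `S₂`, and every simple submodule of the right regular module
`A_{2m+1}(x,y)` (`m ≥ 0`) is isomorphic to `S₁`. -/
theorem AAlgebra_socle (k : Type) [Field k] (x y : ℕ → ℕ)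
    (hx : ∀ i, 0 < x i) (hy : ∀ i, 0 < y i) :
    (∀ m : ℕ, 1 ≤ m →
      ∀ N : Submodule (AAlgebra k x y (2 * m))ᵐᵒᵖ (AAlgebra k x y (2 * m)),
        IsSimpleModule (AAlgebra k x y (2 * m))ᵐᵒᵖ N →
          Nonempty (N ≃ₗ[(AAlgebra k x y (2 * m))ᵐᵒᵖ] AS2 k x y (2 * m))) ∧
    (∀ m : ℕ,
      ∀ N : Submodule (AAlgebra k x y (2 * m + 1))ᵐᵒᵖ (AAlgebra k x y (2 * m + 1)),
        IsSimpleModule (AAlgebra k x y (2 * m + 1))ᵐᵒᵖ N →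
          Nonempty (N ≃ₗ[(AAlgebra k x y (2 * m + 1))ᵐᵒᵖ] AS1 k x y (2 * m + 1))) := by
  refine ⟨fun m hm N hN => ?_, fun m N hN => ?_⟩
  · have hbot : N ≠ ⊥ := (Submodule.nontrivial_iff_ne_bot).mp hN.nontrivial
    obtain ⟨w, hw, hw0, ha, hb⟩ := exists_killed N hbot
    have h1 : w * Agen k x y (2 * m) .e1 = 0 :=
      mul_e1_eq_zero (i := ⟨m - 1, by omega⟩) ⟨0, hy _⟩ (by simp only; omega) w (hb _ _)
    have h2 : w * Agen k x y (2 * m) .e2 = w := by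
      have := congrArg (w * ·) (e1_add_e2 (k := k) (x := x) (y := y) (n := 2 * m))
      simpa only [mul_add, h1, zero_add, mul_one] using this
    refine simple_equiv_charMod (Achi2 k x y (2 * m)) N hN w hw hw0
      (mul_eq_smul_of_gen _ w fun g => ?_)
    rw [Achi2_gen]
    cases g <;> simp [h1, h2, ha, hb]
  · have hbot : N ≠ ⊥ := (Submodule.nontrivial_iff_ne_bot).mp hN.nontrivial
    obtain ⟨w, hw, hw0, ha, hb⟩ := exists_killed N hbot
    have h2 : w * Agen k x y (2 * m + 1) .e2 = 0 :=
      mul_e2_eq_zero (i := ⟨m, by omega⟩) ⟨0, hx _⟩ rfl w (ha _ _)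
    have h1 : w * Agen k x y (2 * m + 1) .e1 = w := by
      have := congrArg (w * ·) (e1_add_e2 (k := k) (x := x) (y := y) (n := 2 * m + 1))
      simpa only [mul_add, h2, add_zero, mul_one] using this
    refine simple_equiv_charMod (Achi1 k x y (2 * m + 1)) N hN w hw hw0
      (mul_eq_smul_of_gen _ w fun g => ?_)
    rw [Achi1_gen]
    cases g <;> simp [h1, h2, ha, hb]

end
end

section
/- Let x, y be sequences of positive integers and n ≥ 1. Every simple submodule of the right regular module A_n(x,y)^! is isomorphic to the simple module S₁; that is, the socle of A_n(x,y)^! as a right module over itself is a direct sum of copies of S₁. -/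
/-!
Products are in composition order, so right multiplication by an arrow lengthens a path at its
source.  No relation of `A_n(x,y)^!` has the form `β * α_{1,1} = 0`, since that would require an
index `i' < 1`; hence deleting a first arrow `α_{1,1}` makes sense, and right multiplication by
`α_{1,1}` is injective on the span of the paths starting at vertex `2`.  This is made precise by a
left module structure on `k × A_n(x,y)^!` in which `α_{1,1}` sends `(1, 0)` to `(0, e₂)`
(`ADualRep`), giving `ADual_mul_e2_eq_zero`.  On the other hand `α_{1,1} * β = 0` for every `β`.

Let `N` be a simple submodule.  If `z e₂ ≠ 0` for some `z ∈ N`, then `w = z α_{1,1}` is a nonzero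
element of `N` with `w e₁ = w`, killed by `e₂` and by all arrows.  Otherwise `N e₂ = 0`, and every
`w ∈ N` has these properties, because `α = e₂ α` and `w β = (w β) e₂ = 0`.  A nonzero such `w`
spans a copy of `S₁` (`ADual_equiv_of_mem`), which must be all of `N`.
-/

/-!
Statement 18: for `n ≥ 1`, every simple submodule of the right regular module
`A_n(x,y)^!` is isomorphic to the simple module `S₁`; that is, the socle of
`A_n(x,y)^!` is a direct sum of copies of `S₁`.
-/

noncomputable section
set_option linter.unusedSectionVars false
set_option linter.unusedVariables false

variable (k : Type) [Field k] (x y : ℕ → ℕ) (n : ℕ)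

/-- The relations defining the quadratic dual `A_n(x,y)^!`: the same path algebra
relations as for `A_n(x,y)`, but now the vanishing quadratic relations are
`α_{i,j} β_{i',j'} = 0` (i.e. `a i j * b i' j' = 0`) for `i ≤ i'`, and
`β_{i',j'} α_{i,j} = 0` (i.e. `b i' j' * a i j = 0`) for `i' < i`. -/
inductive ADualRel (k : Type) [Field k] (x y : ℕ → ℕ) (n : ℕ) :
    FreeAlgebra k (AGen x y n) → FreeAlgebra k (AGen x y n) → Prop
  | idem1 : ADualRel k x y n (FreeAlgebra.ι k AGen.e1 * FreeAlgebra.ι k AGen.e1)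
      (FreeAlgebra.ι k AGen.e1)
  | idem2 : ADualRel k x y n (FreeAlgebra.ι k AGen.e2 * FreeAlgebra.ι k AGen.e2)
      (FreeAlgebra.ι k AGen.e2)
  | orth12 : ADualRel k x y n (FreeAlgebra.ι k AGen.e1 * FreeAlgebra.ι k AGen.e2) 0
  | orth21 : ADualRel k x y n (FreeAlgebra.ι k AGen.e2 * FreeAlgebra.ι k AGen.e1) 0
  | sum : ADualRel k x y n (FreeAlgebra.ι k AGen.e1 + FreeAlgebra.ι k AGen.e2) 1
  | a_tgt (i) (j) : ADualRel k x y n (FreeAlgebra.ι k AGen.e2 * FreeAlgebra.ι k (AGen.a i j))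
      (FreeAlgebra.ι k (AGen.a i j))
  | a_src (i) (j) : ADualRel k x y n (FreeAlgebra.ι k (AGen.a i j) * FreeAlgebra.ι k AGen.e1)
      (FreeAlgebra.ι k (AGen.a i j))
  | b_tgt (i) (j) : ADualRel k x y n (FreeAlgebra.ι k AGen.e1 * FreeAlgebra.ι k (AGen.b i j))
      (FreeAlgebra.ι k (AGen.b i j))
  | b_src (i) (j) : ADualRel k x y n (FreeAlgebra.ι k (AGen.b i j) * FreeAlgebra.ι k AGen.e2)
      (FreeAlgebra.ι k (AGen.b i j))
  | ab (i : Fin ((n + 1) / 2)) (j : Fin (x i)) (i' : Fin (n / 2)) (j' : Fin (y i'))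
      (h : (i : ℕ) ≤ (i' : ℕ)) :
      ADualRel k x y n (FreeAlgebra.ι k (AGen.a i j) * FreeAlgebra.ι k (AGen.b i' j')) 0
  | ba (i : Fin ((n + 1) / 2)) (j : Fin (x i)) (i' : Fin (n / 2)) (j' : Fin (y i'))
      (h : (i' : ℕ) < (i : ℕ)) :
      ADualRel k x y n (FreeAlgebra.ι k (AGen.b i' j') * FreeAlgebra.ι k (AGen.a i j)) 0

/-- The quadratic dual algebra `A_n(x,y)^!`. -/
def ADualAlgebra (k : Type) [Field k] (x y : ℕ → ℕ) (n : ℕ) : Type :=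
  RingQuot (ADualRel k x y n)

instance (k : Type) [Field k] (x y : ℕ → ℕ) (n : ℕ) : Ring (ADualAlgebra k x y n) :=
  inferInstanceAs (Ring (RingQuot (ADualRel k x y n)))

instance (k : Type) [Field k] (x y : ℕ → ℕ) (n : ℕ) : Algebra k (ADualAlgebra k x y n) :=
  inferInstanceAs (Algebra k (RingQuot (ADualRel k x y n)))

variable (k : Type) [Field k] (x y : ℕ → ℕ) (n : ℕ)

/-- The set of (images in `A_n(x,y)^!` of the) arrows of the quiver. -/
def ADualArrows : Set (ADualAlgebra k x y n) :=
  {z | (∃ i j, z = RingQuot.mkAlgHom k (ADualRel k x y n) (FreeAlgebra.ι k (AGen.a i j))) ∨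
    (∃ i j, z = RingQuot.mkAlgHom k (ADualRel k x y n) (FreeAlgebra.ι k (AGen.b i j)))}

/-- The degree-`p` component of `A_n(x,y)^!` for `p ≥ 1` (with respect to the grading
by path length): the `k`-linear span of all products of `p` arrows. -/
def ADualGrade (p : ℕ) : Submodule k (ADualAlgebra k x y n) :=
  Submodule.span k
    {z | ∃ l : List (ADualAlgebra k x y n),
      l.length = p ∧ (∀ u ∈ l, u ∈ ADualArrows k x y n) ∧ z = l.prod}

variable (k : Type) [Field k] (x y : ℕ → ℕ) (n : ℕ)

/-- The character of `A_n(x,y)^!` corresponding to the vertex `1` (killing `e₂` and all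
arrows); the associated one-dimensional right module is the simple module `S₁`. -/
def ADualChi1 : ADualAlgebra k x y n →ₐ[k] k :=
  RingQuot.liftAlgHom k
    ⟨FreeAlgebra.lift k (fun g => match g with
        | AGen.e1 => (1 : k)
        | AGen.e2 => 0
        | AGen.a _ _ => 0
        | AGen.b _ _ => 0),
      by
        rintro u v h
        induction h <;>
          simp [map_mul, map_add, map_one, map_zero, FreeAlgebra.lift_ι_apply]⟩

/-- The simple right `A_n(x,y)^!`-module `S₁` corresponding to the vertex `1`. -/
def ADualS1 : Type := CharMod (ADualChi1 k x y n)

instance : AddCommGroup (ADualS1 k x y n) :=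
  inferInstanceAs (AddCommGroup (CharMod (ADualChi1 k x y n)))

instance : Module (ADualAlgebra k x y n)ᵐᵒᵖ (ADualS1 k x y n) :=
  inferInstanceAs (Module (ADualAlgebra k x y n)ᵐᵒᵖ (CharMod (ADualChi1 k x y n)))

variable {k x y n}

/-! ### Generators and relations of `A_n(x,y)^!` -/

/-- The image in `A_n(x,y)^!` of a generator (trivial path or arrow) of the path algebra. -/
def ADualGen (k : Type) [Field k] {x y : ℕ → ℕ} {n : ℕ} (g : AGen x y n) : ADualAlgebra k x y n :=
  RingQuot.mkAlgHom k (ADualRel k x y n) (FreeAlgebra.ι k g)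

theorem ADual_induction {P : ADualAlgebra k x y n → Prop}
    (hc : ∀ c : k, P (algebraMap k _ c)) (hg : ∀ g, P (ADualGen k g))
    (hm : ∀ u v, P u → P v → P (u * v)) (ha : ∀ u v, P u → P v → P (u + v)) (z) : P z := by
  obtain ⟨f, rfl⟩ := RingQuot.mkAlgHom_surjective k (ADualRel k x y n) z
  induction f using FreeAlgebra.induction with
  | grade0 c => rw [AlgHom.commutes]; exact hc c
  | grade1 g => exact hg g
  | mul u v hu hv => rw [map_mul]; exact hm _ _ hu hv
  | add u v hu hv => rw [map_add]; exact ha _ _ hu hv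

theorem ADual_e1_e1 :
    ADualGen k (AGen.e1 : AGen x y n) * ADualGen k AGen.e1 = ADualGen k AGen.e1 := by
  have := RingQuot.mkAlgHom_rel k (ADualRel.idem1 (k := k) (x := x) (y := y) (n := n))
  rwa [map_mul] at this

theorem ADual_e2_e2 :
    ADualGen k (AGen.e2 : AGen x y n) * ADualGen k AGen.e2 = ADualGen k AGen.e2 := by
  have := RingQuot.mkAlgHom_rel k (ADualRel.idem2 (k := k) (x := x) (y := y) (n := n))
  rwa [map_mul] at this

theorem ADual_e1_e2 :
    ADualGen k (AGen.e1 : AGen x y n) * ADualGen k AGen.e2 = 0 := by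
  have := RingQuot.mkAlgHom_rel k (ADualRel.orth12 (k := k) (x := x) (y := y) (n := n))
  rwa [map_mul, map_zero] at this

theorem ADual_e2_e1 :
    ADualGen k (AGen.e2 : AGen x y n) * ADualGen k AGen.e1 = 0 := by
  have := RingQuot.mkAlgHom_rel k (ADualRel.orth21 (k := k) (x := x) (y := y) (n := n))
  rwa [map_mul, map_zero] at this

theorem ADual_e1_add_e2 : ADualGen k (AGen.e1 : AGen x y n) + ADualGen k AGen.e2 = 1 := by
  have := RingQuot.mkAlgHom_rel k (ADualRel.sum (k := k) (x := x) (y := y) (n := n))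
  rwa [map_add, map_one] at this

theorem ADual_e2_a (i j) : ADualGen k (AGen.e2 : AGen x y n) * ADualGen k (AGen.a i j) =
    ADualGen k (AGen.a i j) := by
  have := RingQuot.mkAlgHom_rel k (ADualRel.a_tgt (k := k) (x := x) (y := y) (n := n) i j)
  rwa [map_mul] at this

theorem ADual_a_e1 (i j) : ADualGen k (AGen.a i j : AGen x y n) * ADualGen k AGen.e1 =
    ADualGen k (AGen.a i j) := by
  have := RingQuot.mkAlgHom_rel k (ADualRel.a_src (k := k) (x := x) (y := y) (n := n) i j)
  rwa [map_mul] at this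

theorem ADual_e1_b (i j) : ADualGen k (AGen.e1 : AGen x y n) * ADualGen k (AGen.b i j) =
    ADualGen k (AGen.b i j) := by
  have := RingQuot.mkAlgHom_rel k (ADualRel.b_tgt (k := k) (x := x) (y := y) (n := n) i j)
  rwa [map_mul] at this

theorem ADual_b_e2 (i j) : ADualGen k (AGen.b i j : AGen x y n) * ADualGen k AGen.e2 =
    ADualGen k (AGen.b i j) := by
  have := RingQuot.mkAlgHom_rel k (ADualRel.b_src (k := k) (x := x) (y := y) (n := n) i j)
  rwa [map_mul] at this

theorem ADual_a_b (i : Fin ((n + 1) / 2)) (j : Fin (x i)) (i' : Fin (n / 2)) (j' : Fin (y i'))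
    (h : (i : ℕ) ≤ (i' : ℕ)) :
    ADualGen k (AGen.a i j : AGen x y n) * ADualGen k (AGen.b i' j') = 0 := by
  have := RingQuot.mkAlgHom_rel k (ADualRel.ab (k := k) (x := x) (y := y) (n := n) i j i' j' h)
  rwa [map_mul, map_zero] at this

theorem ADual_b_a (i : Fin ((n + 1) / 2)) (j : Fin (x i)) (i' : Fin (n / 2)) (j' : Fin (y i'))
    (h : (i' : ℕ) < (i : ℕ)) :
    ADualGen k (AGen.b i' j' : AGen x y n) * ADualGen k (AGen.a i j) = 0 := by
  have := RingQuot.mkAlgHom_rel k (ADualRel.ba (k := k) (x := x) (y := y) (n := n) i j i' j' h)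
  rwa [map_mul, map_zero] at this

/-! ### Injectivity of right multiplication by `α_{1,1}` -/

/-- The scalar by which a generator acts on the first factor of `k × A_n(x,y)^!`: that factor
sits at vertex `1`. -/
def ADualGenScalar : AGen x y n → k
  | AGen.e1 => 1
  | _ => 0

/-- The component `k → A_n(x,y)^!` of the action of a generator on `k × A_n(x,y)^!`, given by the
image of `1`: it is `e₂` for the arrow `α_{1,1}` and zero for all other generators. -/
def ADualGenShift : AGen x y n → ADualAlgebra k x y n
  | AGen.a i j => if (i : ℕ) = 0 ∧ (j : ℕ) = 0 then ADualGen k AGen.e2 else 0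
  | _ => 0

/-- The action of a generator `g` on `k × A_n(x,y)^!`:
`(c, r) ↦ (s c, g r + c t)` with `s = ADualGenScalar g` and `t = ADualGenShift g`. -/
def ADualGenEnd (g : AGen x y n) : Module.End k (k × ADualAlgebra k x y n) :=
  LinearMap.prod ((ADualGenScalar g : k) • LinearMap.fst k k _)
    (LinearMap.mulLeft k (ADualGen k g) ∘ₗ LinearMap.snd k k _ +
      (LinearMap.fst k k _).smulRight (ADualGenShift g))

theorem ADualGenEnd_apply (g : AGen x y n) (p : k × ADualAlgebra k x y n) :
    ADualGenEnd g p = (ADualGenScalar g * p.1, ADualGen k g * p.2 + p.1 • ADualGenShift g) := rfl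

/-- The representation of `A_n(x,y)^!` on `k × A_n(x,y)^!` extending left multiplication on the
second factor, in which `α_{1,1}` sends `(1, 0)` to `(0, e₂)`. -/
def ADualRep : ADualAlgebra k x y n →ₐ[k] Module.End k (k × ADualAlgebra k x y n) :=
  RingQuot.liftAlgHom k ⟨FreeAlgebra.lift k ADualGenEnd, by
    intro u v h
    induction h <;> refine LinearMap.ext fun p => ?_ <;>
      simp only [map_mul, map_add, map_one, map_zero, FreeAlgebra.lift_ι_apply,
        Module.End.mul_apply, Module.End.one_apply, LinearMap.add_apply, LinearMap.zero_apply,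
        ADualGenEnd_apply, ADualGenScalar, ADualGenShift]
    case idem1 => simp [← mul_assoc, ADual_e1_e1]
    case idem2 => simp [← mul_assoc, ADual_e2_e2]
    case orth12 => simp [← mul_assoc, ADual_e1_e2]
    case orth21 => simp [← mul_assoc, ADual_e2_e1]
    case sum => simp [← add_mul, ADual_e1_add_e2]
    case a_tgt i j => split_ifs <;> simp [← mul_assoc, mul_add, ADual_e2_a, ADual_e2_e2]
    case a_src i j => simp [← mul_assoc, ADual_a_e1]
    case b_tgt i j => simp [← mul_assoc, ADual_e1_b]
    case b_src i j => simp [← mul_assoc, ADual_b_e2]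
    case ab i j i' j' h => simp [← mul_assoc, ADual_a_b i j i' j' h]
    case ba i j i' j' h =>
      -- the shift of `α_{i,j}` vanishes because `i' < i` excludes the arrow `α_{1,1}`
      rw [if_neg (by omega)]
      simp [← mul_assoc, ADual_b_a i j i' j' h]⟩

theorem ADualRep_gen (g : AGen x y n) : ADualRep (ADualGen k g) = ADualGenEnd g := by
  unfold ADualRep ADualGen
  erw [RingQuot.liftAlgHom_mkAlgHom_apply]
  exact FreeAlgebra.lift_ι_apply _ _

theorem ADualRep_inr (z r : ADualAlgebra k x y n) : ADualRep z (0, r) = (0, z * r) := by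
  induction z using ADual_induction generalizing r with
  | hc c => simp [AlgHom.commutes, Module.algebraMap_end_apply, Algebra.smul_def]
  | hg g => simp [ADualRep_gen, ADualGenEnd_apply]
  | hm u v hu hv => rw [map_mul, Module.End.mul_apply, hv, hu, mul_assoc]
  | ha u v hu hv => rw [map_add, LinearMap.add_apply, hu, hv, add_mul]; simp

/-- Right multiplication by `α_{1,1}` is injective on the span of the paths starting at vertex `2`. -/
theorem ADual_mul_e2_eq_zero (i : Fin ((n + 1) / 2)) (j : Fin (x i)) (hi : (i : ℕ) = 0)
    (hj : (j : ℕ) = 0) (z : ADualAlgebra k x y n) (h : z * ADualGen k (AGen.a i j) = 0) :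
    z * ADualGen k AGen.e2 = 0 := by
  have h1 := congrArg (fun u => (ADualRep u (1, 0)).2) h
  simpa [ADualRep_gen, ADualGenEnd_apply, ADualGenScalar, ADualGenShift, hi, hj,
    ADualRep_inr] using h1

/-! ### Elements spanning a copy of `S₁` -/

theorem ADualChi1_gen (g : AGen x y n) : ADualChi1 k x y n (ADualGen k g) = ADualGenScalar g := by
  unfold ADualChi1 ADualGen
  erw [RingQuot.liftAlgHom_mkAlgHom_apply]
  rw [FreeAlgebra.lift_ι_apply]
  cases g <;> rfl

theorem ADual_mul_eq_chi (w : ADualAlgebra k x y n)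
    (hw : ∀ g, w * ADualGen k g = (ADualGenScalar g : k) • w) (r : ADualAlgebra k x y n) :
    w * r = ADualChi1 k x y n r • w := by
  induction r using ADual_induction with
  | hc c => rw [AlgHom.commutes, ← Algebra.commutes, ← Algebra.smul_def]; rfl
  | hg g => rw [hw, ADualChi1_gen]
  | hm u v hu hv => rw [← mul_assoc, hu, smul_mul_assoc, hv, smul_smul, map_mul]
  | ha u v hu hv => rw [mul_add, hu, hv, map_add, add_smul]

/-- A nonzero `w` on which every generator acts from the right as on `S₁` spans a copy of `S₁`,
so a simple submodule containing it is isomorphic to `S₁`. -/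
theorem ADual_equiv_of_mem (N : Submodule (ADualAlgebra k x y n)ᵐᵒᵖ (ADualAlgebra k x y n))
    (hN : IsSimpleModule (ADualAlgebra k x y n)ᵐᵒᵖ N) (w : ADualAlgebra k x y n) (hwN : w ∈ N)
    (hw0 : w ≠ 0) (hw : ∀ g, w * ADualGen k g = (ADualGenScalar g : k) • w) :
    Nonempty (N ≃ₗ[(ADualAlgebra k x y n)ᵐᵒᵖ] ADualS1 k x y n) := by
  have hmem (c : k) : c • w ∈ N := by
    rw [Algebra.smul_def, Algebra.commutes]
    exact N.smul_mem (MulOpposite.op (algebraMap k _ c)) hwN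
  let f : ADualS1 k x y n →ₗ[(ADualAlgebra k x y n)ᵐᵒᵖ] N :=
    { toFun := fun c => ⟨(show k from c) • w, hmem c⟩
      map_add' := fun c d => Subtype.ext (add_smul (show k from c) (show k from d) w)
      map_smul' := fun r c => Subtype.ext (by
        change (ADualChi1 k x y n r.unop * (show k from c)) • w = ((show k from c) • w) * r.unop
        rw [smul_mul_assoc, ADual_mul_eq_chi w hw, smul_smul, mul_comm]) }
  have hinj : Function.Injective f := by
    intro c d h
    exact smul_left_injective k hw0 (congrArg Subtype.val h)
  have hsurj : Function.Surjective f := by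
    rw [← LinearMap.range_eq_top]
    refine (eq_bot_or_eq_top _).resolve_left fun h => hw0 ?_
    have h1 : f (show k from 1) = 0 := by
      rw [LinearMap.range_eq_bot] at h
      rw [h]; rfl
    have h2 : (1 : k) • w = 0 := congrArg Subtype.val h1
    rwa [one_smul] at h2
  exact ⟨(LinearEquiv.ofBijective f ⟨hinj, hsurj⟩).symm⟩

/-- STATEMENT 18: every simple submodule of the right regular module `A_n(x,y)^!`
(`n ≥ 1`) is isomorphic to `S₁`. -/
theorem ADualAlgebra_socle (k : Type) [Field k] (x y : ℕ → ℕ)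
    (hx : ∀ i, 0 < x i) (hy : ∀ i, 0 < y i) (n : ℕ) (hn : 1 ≤ n) :
    ∀ N : Submodule (ADualAlgebra k x y n)ᵐᵒᵖ (ADualAlgebra k x y n),
      IsSimpleModule (ADualAlgebra k x y n)ᵐᵒᵖ N →
        Nonempty (N ≃ₗ[(ADualAlgebra k x y n)ᵐᵒᵖ] ADualS1 k x y n) := by
  intro N hN
  have hmul {z : ADualAlgebra k x y n} (hz : z ∈ N) (r) : z * r ∈ N :=
    N.smul_mem (MulOpposite.op r) hz
  by_cases h : ∃ z ∈ N, z * ADualGen k AGen.e2 ≠ 0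
  · obtain ⟨z, hz, hz2⟩ := h
    -- `n ≥ 1` and `x₁ ≥ 1` ensure that the arrow `α_{1,1}` exists
    let i : Fin ((n + 1) / 2) := ⟨0, by omega⟩
    let j : Fin (x i) := ⟨0, hx _⟩
    refine ADual_equiv_of_mem N hN (z * ADualGen k (AGen.a i j)) (hmul hz _)
      (fun h0 => hz2 (ADual_mul_e2_eq_zero i j rfl rfl z h0)) fun g => ?_
    have he2 : ADualGen k (AGen.a i j : AGen x y n) * ADualGen k AGen.e2 = 0 := by
      rw [← ADual_a_e1, mul_assoc, ADual_e1_e2, mul_zero]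
    cases g with
    | e1 => simp [ADualGenScalar, mul_assoc, ADual_a_e1]
    | e2 => simp [ADualGenScalar, mul_assoc, he2]
    | a i' j' =>
      rw [← ADual_e2_a i' j', mul_assoc, ← mul_assoc (ADualGen k (AGen.a i j)), he2]
      simp [ADualGenScalar]
    | b i' j' => simp [ADualGenScalar, mul_assoc, ADual_a_b i j i' j' (Nat.zero_le _)]
  · push Not at h
    have := hN.nontrivial
    obtain ⟨⟨w, hwN⟩, hw⟩ := exists_ne (0 : N)
    refine ADual_equiv_of_mem N hN w hwN (fun h0 => hw (Subtype.ext h0)) fun g => ?_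
    cases g with
    | e1 =>
      have h1 : w * (ADualGen k AGen.e1 + ADualGen k AGen.e2) = w := by
        rw [ADual_e1_add_e2, mul_one]
      rw [mul_add, h w hwN, add_zero] at h1
      simp [ADualGenScalar, h1]
    | e2 => simp [ADualGenScalar, h w hwN]
    | a i' j' => rw [← ADual_e2_a i' j', ← mul_assoc, h w hwN]; simp [ADualGenScalar]
    | b i' j' =>
      rw [← ADual_b_e2 i' j', ← mul_assoc, h _ (hmul hwN _)]; simp [ADualGenScalar]
end
end
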